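/- Fix α > 0, β > 0 and P > 0, and let H : Σ → ℝ be continuous, everywhere positive, locally ring-constant, and satisfy L_β H = e^P·H. Then for every n ≥ 1: for every x ∈ [0^n*₀], H(x) = e^{(n−1)P − β/2^n} · ((e^P − 1)/(e^P + e^{−αβ})) · ( e^{P+β}·H(1^∞) − ( F_{n−2}(P,β)·(1 + e^{−P−αβ}) + e^{(1−α)β} )·H(0^∞) ); and for every y ∈ [1^n*₁], H(y) = e^{(n−1)P − 3β/2^n} · ((e^P − 1)/(e^P + e^{−αβ})) · ( e^{P+3β}·H(0^∞) − ( F_{n−2}(P,3β)·(1 + e^{−P−αβ}) + e^{(3−α)β} )·H(1^∞) ). -/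

import Mathlib

/-!
Each of the three preimages of a point lies in a ring, in `[2]`, or is a fixed point, so a locally
ring-constant eigenfunction is described by the numbers `a n = H [0^n*₀]`, `b n = H [1^n*₁]`,
`c = H [2]`, `h₀ = H (0^∞)` and `h₁ = H (1^∞)`. With `s = αβ`, the eigenvalue equation at `0^∞`,
at `1^∞`, on `[2]` and on `[0^n*₀]` reads

* `e^{-3β/2} b 1 + e^{-s} c = (e^P - 1) h₀`,
* `e^{-β/2} a 1 + e^{-s} c = (e^P - 1) h₁`,
* `e^{-β/2} a 1 + e^{-3β/2} b 1 + e^{-s} c = e^P c`,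
* `e^{-β/2^{n+1}} a (n+1) + e^{-3β/2} b 1 + e^{-s} c = e^P a n`,

and symmetrically on `[1^n*₁]`. The first three equations give `a 1`, `b 1` and `c` in terms of
`h₀` and `h₁`; substituting the first into the fourth leaves the scalar recurrence
`e^{-β/2^{n+1}} a (n+1) = e^P a n - (e^P - 1) h₀`, which `ring_recurrence` solves by induction.
The ring `[1^n*₁]` leads to the same recurrence with `β` replaced by `3β` and `h₀`, `h₁` exchanged.
-/

open MeasureTheory Filter Topology

noncomputable section

/-- The full shift space `Σ = {0,1,2}^ℕ`. -/
abbrev Sig : Type := ℕ → Fin 3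

/-- The shift map `σ`. -/
def shift (x : Sig) : Sig := fun n => x (n + 1)

/-- The fixed point `0^∞`. -/
def zeroSeq : Sig := fun _ => 0

/-- The fixed point `1^∞`. -/
def oneSeq : Sig := fun _ => 1

/-- Prepending a symbol: `a·x = (a, x₀, x₁, …)`. -/
def cons (a : Fin 3) (x : Sig) : Sig := fun n => Nat.casesOn n a x

open Classical in
/-- The metric `d(x,y) = (1/2)^(min{n : x n ≠ y n})`, with `d(x,x) = 0`. -/
def dist3 (x y : Sig) : ℝ :=
  if h : x ≠ y then (1 / 2 : ℝ) ^ Nat.find (Function.ne_iff.mp h) else 0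

/-- The potential `A_α`. -/
def pot (α : ℝ) (x : Sig) : ℝ :=
  if x 0 = 0 then -dist3 x zeroSeq
  else if x 0 = 1 then -(3 * dist3 x oneSeq)
  else -α

/-- The transfer operator `L_β` (for parameter `α`). -/
def transfer (α β : ℝ) (f : Sig → ℝ) : Sig → ℝ :=
  fun x => ∑ a : Fin 3, Real.exp (β * pot α (cons a x)) * f (cons a x)

/-- The ring `[a^n *_a] = {x : x_i = a for i < n, x_n ≠ a}`. -/
def ringSet (a : Fin 3) (n : ℕ) : Set Sig := {x | (∀ i < n, x i = a) ∧ x n ≠ a}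

/-- The cylinder `[a] = {x : x₀ = a}`. -/
def cyl (a : Fin 3) : Set Sig := {x | x 0 = a}

/-- `H` is locally ring-constant: constant on `[2]` and on each ring `[0^m*₀]`, `[1^m*₁]`. -/
def LocallyRingConstant (H : Sig → ℝ) : Prop :=
  (∀ x ∈ cyl 2, ∀ y ∈ cyl 2, H x = H y) ∧
  (∀ m : ℕ, 1 ≤ m → ∀ x ∈ ringSet 0 m, ∀ y ∈ ringSet 0 m, H x = H y) ∧
  (∀ m : ℕ, 1 ≤ m → ∀ x ∈ ringSet 1 m, ∀ y ∈ ringSet 1 m, H x = H y)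

/-- An eigen-measure for `(α,β)` with exponent `P`:  a Borel probability measure `ν`
with `P > 0` and `∫ L_β f dν = e^P ∫ f dν` for every continuous `f`. -/
structure IsEigenMeasure (α β P : ℝ) (ν : Measure Sig) : Prop where
  P_pos : 0 < P
  prob : IsProbabilityMeasure ν
  eigenMeas : ∀ f : Sig → ℝ, Continuous f →
    ∫ x, transfer α β f x ∂ν = Real.exp P * ∫ x, f x ∂ν

/-- Eigen-data `(P, H, ν)` for `(α,β)`. -/
structure IsEigenData (α β P : ℝ) (H : Sig → ℝ) (ν : Measure Sig) : Prop where
  P_pos : 0 < P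
  H_cont : Continuous H
  H_pos : ∀ x, 0 < H x
  eigenFun : ∀ x, transfer α β H x = Real.exp P * H x
  prob : IsProbabilityMeasure ν
  eigenMeas : ∀ f : Sig → ℝ, Continuous f →
    ∫ x, transfer α β f x ∂ν = Real.exp P * ∫ x, f x ∂ν

/-- The Gibbs measure `μ(B) = (∫_B H dν)/(∫ H dν)`. -/
def gibbs (H : Sig → ℝ) (ν : Measure Sig) : Measure Sig :=
  (ν.withDensity (fun x => ENNReal.ofReal (H x)) Set.univ)⁻¹ •
    ν.withDensity (fun x => ENNReal.ofReal (H x))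

/-- Weak convergence (as `β → +∞`) of a family of measures to a measure `μ∞`:
convergence of integrals of every bounded continuous function. -/
def WeakLimit (μ : ℝ → Measure Sig) (μlim : Measure Sig) : Prop :=
  ∀ f : Sig → ℝ, Continuous f → (∃ C : ℝ, ∀ x, |f x| ≤ C) →
    Tendsto (fun β => ∫ x, f x ∂(μ β)) atTop (nhds (∫ x, f x ∂μlim))

/-- `F(Z,β) = Σ_{k=0}^∞ e^{−kZ}·e^{β/2^{k+1}}`. -/
def Ffun (Z β : ℝ) : ℝ := ∑' k : ℕ, Real.exp (-(k : ℝ) * Z) * Real.exp (β / 2 ^ (k + 1))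

/-- `Fpartial Z β m = F_{m-1}(Z,β) = Σ_{k=0}^{m-1} e^{−kZ}·e^{β/2^{k+1}}` (so `Fpartial Z β 0 = F_{-1} = 0`). -/
def Fpartial (Z β : ℝ) (m : ℕ) : ℝ :=
  ∑ k ∈ Finset.range m, Real.exp (-(k : ℝ) * Z) * Real.exp (β / 2 ^ (k + 1))

theorem dist3_of_mem_ringSet {a : Fin 3} {n : ℕ} {x : Sig} (hx : x ∈ ringSet a n) :
    dist3 x (fun _ => a) = (1 / 2 : ℝ) ^ n := by
  classical
  have hne : x ≠ fun _ => a := fun h => hx.2 (congrFun h n)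
  unfold dist3
  rw [dif_pos hne]
  congr 1
  rw [Nat.find_eq_iff]
  exact ⟨hx.2, fun m hm => not_not.mpr (hx.1 m hm)⟩

theorem cons_mem_ringSet {a : Fin 3} {n : ℕ} {x : Sig} (hx : x ∈ ringSet a n) :
    cons a x ∈ ringSet a (n + 1) := by
  refine ⟨fun i hi => ?_, hx.2⟩
  cases i with
  | zero => rfl
  | succ i => exact hx.1 i (by omega)

theorem cons_const (a : Fin 3) : cons a (fun _ => a) = fun _ => a := by
  funext i
  cases i <;> rfl

/-- A point of the ring `[a^n *_a]`, for `a ≠ 2`. -/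
def ringPoint (a : Fin 3) (n : ℕ) : Sig := fun i => if i < n then a else 2

theorem ringPoint_mem {a : Fin 3} (ha : a ≠ 2) (n : ℕ) : ringPoint a n ∈ ringSet a n :=
  ⟨fun i hi => by simp [ringPoint, hi], by simpa [ringPoint] using ha.symm⟩

theorem mem_ringSet_zero {a : Fin 3} {x : Sig} (h : x 0 ≠ a) : x ∈ ringSet a 0 :=
  ⟨fun i hi => absurd hi (Nat.not_lt_zero i), h⟩

/-- The case `n = 0` covers every `x` that does not start with `0`. -/
theorem pot_cons_zero (α : ℝ) {n : ℕ} {x : Sig} (hx : x ∈ ringSet 0 n) :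
    pot α (cons 0 x) = -(1 / 2 : ℝ) ^ (n + 1) := by
  have h := dist3_of_mem_ringSet (cons_mem_ringSet hx)
  have h0 : cons 0 x 0 = 0 := rfl
  rw [pot, if_pos h0]
  exact congrArg Neg.neg h

/-- The case `n = 0` covers every `x` that does not start with `1`. -/
theorem pot_cons_one (α : ℝ) {n : ℕ} {x : Sig} (hx : x ∈ ringSet 1 n) :
    pot α (cons 1 x) = -(3 * (1 / 2 : ℝ) ^ (n + 1)) := by
  have h := dist3_of_mem_ringSet (cons_mem_ringSet hx)
  have h0 : cons 1 x 0 = 1 := rfl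
  rw [pot, if_neg (by rw [h0]; decide), if_pos h0]
  exact congrArg (fun t => -(3 * t)) h

theorem pot_cons_two (α : ℝ) (x : Sig) : pot α (cons 2 x) = -α := by
  have h0 : cons 2 x 0 = 2 := rfl
  rw [pot, if_neg (by rw [h0]; decide), if_neg (by rw [h0]; decide)]

theorem pot_zeroSeq (α : ℝ) : pot α zeroSeq = 0 := by
  simp [pot, dist3, zeroSeq]

theorem pot_oneSeq (α : ℝ) : pot α oneSeq = 0 := by
  simp [pot, dist3, oneSeq]

/-- Values of the first ring: eliminating `c` and `w` (the weighted value on the first ring of the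
other symbol) from the eigenvalue equations at the two fixed points and on `[2]`. Here `h` and `h'`
are the values at the fixed point of the ring and at the other fixed point. -/
theorem first_ring {P s b a w c h h' : ℝ}
    (e₀ : w + Real.exp (-s) * c = (Real.exp P - 1) * h)
    (e₁ : Real.exp (-(b / 2)) * a + Real.exp (-s) * c = (Real.exp P - 1) * h')
    (e₂ : Real.exp (-(b / 2)) * a + w + Real.exp (-s) * c = Real.exp P * c) :
    a = Real.exp (-(b / 2)) * ((Real.exp P - 1) / (Real.exp P + Real.exp (-s))) *
      (Real.exp (P + b) * h' - Real.exp (b - s) * h) := by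
  have hD : Real.exp P + Real.exp (-s) ≠ 0 := by positivity
  have hb : Real.exp b = Real.exp (b / 2) * Real.exp (b / 2) := by
    rw [← Real.exp_add]; ring_nf
  have hinv : Real.exp (-(b / 2)) * Real.exp (b / 2) = 1 := by
    rw [← Real.exp_add]; simp
  rw [Real.exp_add, sub_eq_add_neg b s, Real.exp_add, hb]
  have key : Real.exp (-(b / 2)) * a * (Real.exp P + Real.exp (-s)) =
      (Real.exp P - 1) * (Real.exp P * h' - Real.exp (-s) * h) := by
    linear_combination (-Real.exp (-s)) * e₀ + Real.exp P * e₁ + Real.exp (-s) * e₂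
  field_simp
  generalize Real.exp (-(b / 2)) = u at *
  generalize Real.exp (b / 2) = v at *
  linear_combination v * key + (-a * (Real.exp P + Real.exp (-s)) -
    v * (Real.exp P - 1) * (Real.exp P * h' - Real.exp (-s) * h)) * hinv

/-- Solution of the recurrence for the ring values, with initial value given by `first_ring`. -/
theorem ring_recurrence {P s b h h' : ℝ} {a : ℕ → ℝ}
    (h1 : a 1 = Real.exp (-(b / 2)) * ((Real.exp P - 1) / (Real.exp P + Real.exp (-s))) *
      (Real.exp (P + b) * h' - Real.exp (b - s) * h))
    (hrec : ∀ n : ℕ, 1 ≤ n →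
      Real.exp (-(b / 2 ^ (n + 1))) * a (n + 1) = Real.exp P * a n - (Real.exp P - 1) * h)
    (n : ℕ) (hn : 1 ≤ n) :
    a n = Real.exp (((n : ℝ) - 1) * P - b / 2 ^ n) *
      ((Real.exp P - 1) / (Real.exp P + Real.exp (-s))) *
      (Real.exp (P + b) * h' -
        (Fpartial P b (n - 1) * (1 + Real.exp (-P - s)) + Real.exp (b - s)) * h) := by
  induction n, hn using Nat.le_induction with
  | base => simpa [Fpartial] using h1
  | succ n hn ih =>
    obtain ⟨m, rfl⟩ : ∃ m, n = m + 1 := ⟨n - 1, by omega⟩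
    have hr := hrec (m + 1) hn
    rw [ih] at hr
    simp only [Nat.add_sub_cancel] at hr ⊢
    have hF : Fpartial P b (m + 1) =
        Fpartial P b m + Real.exp (-(m : ℝ) * P) * Real.exp (b / 2 ^ (m + 1)) := by
      rw [Fpartial, Finset.sum_range_succ, ← Fpartial]
    have hD : Real.exp P + Real.exp (-s) ≠ 0 := by positivity
    have hK : (Real.exp P - 1) / (Real.exp P + Real.exp (-s)) *
        (Real.exp P + Real.exp (-s)) = Real.exp P - 1 := div_mul_cancel₀ _ hD
    have hhalf : b / 2 ^ (m + 1) = 2 * (b / 2 ^ (m + 1 + 1)) := by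
      rw [pow_succ (2 : ℝ) (m + 1)]; field_simp
    rw [hF]
    rw [hhalf] at hr ⊢
    generalize b / 2 ^ (m + 1 + 1) = t at *
    generalize (Real.exp P - 1) / (Real.exp P + Real.exp (-s)) = K at *
    rw [← hK] at hr
    push_cast at hr ⊢
    have eP : Real.exp (-P - s) = Real.exp (-P) * Real.exp (-s) := by
      rw [← Real.exp_add]; ring_nf
    have e1 : Real.exp (((m : ℝ) + 1 - 1) * P - 2 * t) =
        Real.exp (m * P) * (Real.exp (-t) * Real.exp (-t)) := by
      rw [← Real.exp_add, ← Real.exp_add]; ring_nf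
    have e2 : Real.exp (((m : ℝ) + 1 + 1 - 1) * P - t) =
        Real.exp (m * P) * Real.exp P * Real.exp (-t) := by
      rw [← Real.exp_add, ← Real.exp_add]; ring_nf
    have e3 : Real.exp (2 * t) = Real.exp t * Real.exp t := by
      rw [← Real.exp_add]; ring_nf
    have i1 : Real.exp (-t) * Real.exp t = 1 := by rw [← Real.exp_add]; simp
    have i2 : Real.exp (-P) * Real.exp P = 1 := by rw [← Real.exp_add]; simp
    have i3 : Real.exp (-(m : ℝ) * P) * Real.exp (m * P) = 1 := by
      rw [← Real.exp_add]; simp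
    rw [e1] at hr
    rw [e2, e3]
    have ht : Real.exp (-t) ≠ 0 := Real.exp_ne_zero _
    apply mul_left_cancel₀ ht
    rw [hr, eP]
    generalize Real.exp (-t) = u at *
    generalize Real.exp t = v at *
    generalize Real.exp (-(m : ℝ) * P) = q at *
    generalize Real.exp ((m : ℝ) * P) = r at *
    generalize Real.exp (-P) = p' at *
    generalize Real.exp P = p at *
    generalize Real.exp (-s) = z at *
    -- the new summand of `F` contributes `(u v)² (q r) K (p + p p' z) h = K (p + z) h`
    have hnew : (u * v) * (u * v) * (q * r) * K * (p + (p' * p) * z) * h = K * (p + z) * h := by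
      rw [i1, i2, i3]; ring
    linear_combination hnew

/-- Exact formulas for the eigen-function on the rings `[0^n*₀]` and `[1^n*₁]`. -/
theorem eigenfunction_ring_formula (α β P : ℝ) (hα : 0 < α) (hβ : 0 < β) (hP : 0 < P)
    (H : Sig → ℝ) (hcont : Continuous H) (hpos : ∀ x, 0 < H x)
    (hRC : LocallyRingConstant H)
    (heig : ∀ x, transfer α β H x = Real.exp P * H x) :
    ∀ n : ℕ, 1 ≤ n →
      (∀ x ∈ ringSet 0 n,
        H x = Real.exp (((n : ℝ) - 1) * P - β / 2 ^ n) *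
          ((Real.exp P - 1) / (Real.exp P + Real.exp (-(α * β)))) *
          (Real.exp (P + β) * H oneSeq -
            (Fpartial P β (n - 1) * (1 + Real.exp (-P - α * β)) +
              Real.exp ((1 - α) * β)) * H zeroSeq)) ∧
      (∀ y ∈ ringSet 1 n,
        H y = Real.exp (((n : ℝ) - 1) * P - 3 * β / 2 ^ n) *
          ((Real.exp P - 1) / (Real.exp P + Real.exp (-(α * β)))) *
          (Real.exp (P + 3 * β) * H zeroSeq -
            (Fpartial P (3 * β) (n - 1) * (1 + Real.exp (-P - α * β)) +
              Real.exp ((3 - α) * β)) * H oneSeq)) := by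
  obtain ⟨hRC2, hRC0, hRC1⟩ := hRC
  set a : ℕ → ℝ := fun n => H (ringPoint 0 n) with ha
  set b : ℕ → ℝ := fun n => H (ringPoint 1 n) with hb
  set c : ℝ := H (fun _ => 2) with hc
  have Ha : ∀ n, 1 ≤ n → ∀ x ∈ ringSet 0 n, H x = a n := fun n hn x hx =>
    hRC0 n hn x hx _ (ringPoint_mem (by decide) n)
  have Hb : ∀ n, 1 ≤ n → ∀ x ∈ ringSet 1 n, H x = b n := fun n hn x hx =>
    hRC1 n hn x hx _ (ringPoint_mem (by decide) n)
  have T0 : ∀ n, ∀ x ∈ ringSet 0 n, Real.exp (β * pot α (cons 0 x)) * H (cons 0 x) =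
      Real.exp (-(β / 2 ^ (n + 1))) * a (n + 1) := by
    intro n x hx
    rw [pot_cons_zero α hx, Ha (n + 1) (by omega) _ (cons_mem_ringSet hx)]
    congr 2
    rw [one_div, inv_pow]; ring
  have T1 : ∀ n, ∀ x ∈ ringSet 1 n, Real.exp (β * pot α (cons 1 x)) * H (cons 1 x) =
      Real.exp (-(3 * β / 2 ^ (n + 1))) * b (n + 1) := by
    intro n x hx
    rw [pot_cons_one α hx, Hb (n + 1) (by omega) _ (cons_mem_ringSet hx)]
    congr 2
    rw [one_div, inv_pow]; ring
  have T2 : ∀ x, Real.exp (β * pot α (cons 2 x)) * H (cons 2 x) =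
      Real.exp (-(α * β)) * c := by
    intro x
    rw [pot_cons_two, hRC2 (cons 2 x) rfl (fun _ => 2) rfl]
    congr 2
    ring
  have E : ∀ x, Real.exp (β * pot α (cons 0 x)) * H (cons 0 x) +
      Real.exp (β * pot α (cons 1 x)) * H (cons 1 x) +
      Real.exp (-(α * β)) * c = Real.exp P * H x := by
    intro x
    rw [← heig x, transfer, Fin.sum_univ_three, T2]
  -- the eigenvalue equation at the two fixed points, on `[2]`, and on the rings
  have E0 := E zeroSeq
  rw [T1 0 zeroSeq (mem_ringSet_zero (by simp [zeroSeq])),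
    show cons 0 zeroSeq = zeroSeq from cons_const 0, pot_zeroSeq, mul_zero, Real.exp_zero,
    zero_add, pow_one] at E0
  have E1 := E oneSeq
  rw [T0 0 oneSeq (mem_ringSet_zero (by simp [oneSeq])),
    show cons 1 oneSeq = oneSeq from cons_const 1, pot_oneSeq, mul_zero, Real.exp_zero,
    zero_add, pow_one] at E1
  have E2 := E (fun _ => 2)
  rw [T0 0 _ (mem_ringSet_zero (by simp)), T1 0 _ (mem_ringSet_zero (by simp)),
    zero_add, pow_one] at E2
  have R0 : ∀ n : ℕ, 1 ≤ n → Real.exp (-(β / 2 ^ (n + 1))) * a (n + 1) =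
      Real.exp P * a n - (Real.exp P - 1) * H zeroSeq := by
    intro n hn
    have hx : ringPoint 0 n ∈ ringSet 0 n := ringPoint_mem (by decide) n
    have h := E (ringPoint 0 n)
    have hx1 : ringPoint 0 n ∈ ringSet 1 0 :=
      mem_ringSet_zero (by rw [hx.1 0 (by omega)]; decide)
    rw [T0 n _ hx, T1 0 _ hx1, zero_add, pow_one, Ha n hn _ hx] at h
    linear_combination h - E0
  have R1 : ∀ n : ℕ, 1 ≤ n → Real.exp (-(3 * β / 2 ^ (n + 1))) * b (n + 1) =
      Real.exp P * b n - (Real.exp P - 1) * H oneSeq := by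
    intro n hn
    have hx : ringPoint 1 n ∈ ringSet 1 n := ringPoint_mem (by decide) n
    have h := E (ringPoint 1 n)
    have hx0 : ringPoint 1 n ∈ ringSet 0 0 :=
      mem_ringSet_zero (by rw [hx.1 0 (by omega)]; decide)
    rw [T1 n _ hx, T0 0 _ hx0, zero_add, pow_one, Hb n hn _ hx] at h
    linear_combination h - E1
  have A1 := first_ring (P := P) (s := α * β) (b := β) (a := a 1)
    (w := Real.exp (-(3 * β / 2)) * b 1) (c := c) (h := H zeroSeq) (h' := H oneSeq)
    (by linear_combination E0) (by linear_combination E1) E2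
  have B1 := first_ring (P := P) (s := α * β) (b := 3 * β) (a := b 1)
    (w := Real.exp (-(β / 2)) * a 1) (c := c) (h := H oneSeq) (h' := H zeroSeq)
    (by linear_combination E1) (by linear_combination E0) (by linear_combination E2)
  intro n hn
  refine ⟨fun x hx => ?_, fun y hy => ?_⟩
  · rw [Ha n hn x hx, ring_recurrence A1 R0 n hn, show (1 - α) * β = β - α * β by ring]
  · rw [Hb n hn y hy, ring_recurrence B1 R1 n hn, show (3 - α) * β = 3 * β - α * β by ring]

end
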